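/- Let θ = (𝕋, 𝕆, μ₁) and θ̂ = (𝕋̂, 𝕆̂, μ̂₁) be two POMDP parameter triples with S ≤ O such that every 𝕆_h has full column rank and σ_min(𝕆̂_h) ≥ α > 0 for every h ∈ [H]. Let π be a deterministic policy, and for τ_H ∈ Γ(π, H) let p(τ_H; θ) denote the conditional probability of the observation sequence of τ_H given its action sequence under θ. Then Σ_{τ_H ∈ Γ(π,H)} |p(τ_H; θ̂) − p(τ_H; θ)| ≤ (√S/α) ( ‖b₀(θ̂) − b₀(θ)‖₁ + Σ_{(a,o) ∈ 𝒜×𝒪} ‖(B₁(a, o; θ̂) − B₁(a, o; θ)) b₀(θ)‖₁ + Σ_{h=2}^{H−1} Σ_{(a, ã, o) ∈ 𝒜²×𝒪} Σ_{s ∈ 𝒮} ‖(B_h(a, o; θ̂) − B_h(a, o; θ)) 𝕆_h 𝕋_{h−1}(ã) e_s‖₁ · Pr^π_θ(s_{h−1} = s) ). -/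

import Mathlib

open Matrix BigOperators
open scoped Classical

noncomputable section

/-- The entrywise ℓ¹-norm of a finite vector. -/
def l1norm {n : ℕ} (v : Fin n → ℝ) : ℝ := ∑ i, |v i|

/-- The Euclidean (ℓ²) norm of a finite vector. -/
def l2norm {n : ℕ} (v : Fin n → ℝ) : ℝ := Real.sqrt (∑ i, (v i) ^ 2)

/-- The smallest singular value of a matrix, i.e. the infimum of `‖M x‖₂`
over unit vectors `x`. -/
def sigmaMin {m n : ℕ} (M : Matrix (Fin m) (Fin n) ℝ) : ℝ :=
  sInf {r : ℝ | ∃ x : Fin n → ℝ, l2norm x = 1 ∧ r = l2norm (M.mulVec x)}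

/-- The Moore–Penrose pseudoinverse of a full-column-rank matrix:
`M† = (Mᵀ M)⁻¹ Mᵀ`. -/
def pinvFC {m n : ℕ} (M : Matrix (Fin m) (Fin n) ℝ) : Matrix (Fin n) (Fin m) ℝ :=
  (Mᵀ * M)⁻¹ * Mᵀ

/-- A POMDP parameter triple `θ = (𝕋, 𝕆, μ₁)`: column-stochastic transition
matrices `𝕋_h(a) ∈ ℝ^{S×S}` (entry `(s', s)` is `𝕋_h(s'|s,a)`), observation
matrices `𝕆_h ∈ ℝ^{O×S}` with probability-vector columns, and an initial
distribution `μ₁ ∈ ℝ^S`.  Steps are indexed by `ℕ` (1-based). -/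
structure POMDPParams (S A O : ℕ) where
  T : ℕ → Fin A → Matrix (Fin S) (Fin S) ℝ
  Ob : ℕ → Matrix (Fin O) (Fin S) ℝ
  mu1 : Fin S → ℝ
  T_nonneg : ∀ h a s' s, 0 ≤ T h a s' s
  T_colsum : ∀ h a s, ∑ s', T h a s' s = 1
  Ob_nonneg : ∀ h o s, 0 ≤ Ob h o s
  Ob_colsum : ∀ h s, ∑ o, Ob h o s = 1
  mu1_nonneg : ∀ s, 0 ≤ mu1 s
  mu1_sum : ∑ s, mu1 s = 1

namespace POMDPParams

variable {S A O : ℕ}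

/-- The observable operator `B_h(a, o; θ) = 𝕆_{h+1} 𝕋_h(a) diag(𝕆_h(o|·)) 𝕆_h†`. -/
def Bop (θ : POMDPParams S A O) (h : ℕ) (a : Fin A) (o : Fin O) :
    Matrix (Fin O) (Fin O) ℝ :=
  θ.Ob (h + 1) * θ.T h a * Matrix.diagonal (fun s => θ.Ob h o s) * pinvFC (θ.Ob h)

/-- The initial observable-operator vector `b₀(θ) = 𝕆₁ μ₁`. -/
def bvec0 (θ : POMDPParams S A O) : Fin O → ℝ := (θ.Ob 1).mulVec θ.mu1

/-- A length-`h` trajectory `τ_h = (a_h, o_h, …, a₁, o₁)` is encoded as a map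
`Fin h → Fin A × Fin O`, index `i` holding the pair `(a_{i+1}, o_{i+1})`. -/
abbrev Traj (A O h : ℕ) := Fin h → Fin A × Fin O

/-- The unnormalized belief
`b(τ_h; θ) = B_h(a_h, o_h; θ) ⋯ B₁(a₁, o₁; θ) b₀(θ)`. -/
def belief (θ : POMDPParams S A O) : (h : ℕ) → Traj A O h → Fin O → ℝ
  | 0, _ => θ.bvec0
  | h + 1, τ =>
      (θ.Bop (h + 1) (τ (Fin.last h)).1 (τ (Fin.last h)).2).mulVec
        (θ.belief h (fun i : Fin h => τ i.castSucc))

/-- `stateBelief θ h τ s = Pr_θ(o_h, …, o₁, s_{h+1} = s | a_h, …, a₁)`, the joint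
probability of the observations of `τ` together with reaching state `s` at step
`h+1`, given the actions of `τ`. -/
def stateBelief (θ : POMDPParams S A O) : (h : ℕ) → Traj A O h → Fin S → ℝ
  | 0, _ => θ.mu1
  | h + 1, τ =>
      (θ.T (h + 1) (τ (Fin.last h)).1).mulVec
        (fun s => θ.Ob (h + 1) (τ (Fin.last h)).2 s *
          θ.stateBelief h (fun i : Fin h => τ i.castSucc) s)

/-- The conditional trajectory probability
`p(τ_h; θ) = Pr_θ(o_h, …, o₁ | a_{h−1}, …, a₁)`
(the last action of `τ_h` is irrelevant). -/
def trajProb (θ : POMDPParams S A O) : (h : ℕ) → Traj A O h → ℝ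
  | 0, _ => 1
  | h + 1, τ =>
      ∑ s, θ.Ob (h + 1) (τ (Fin.last h)).2 s *
        θ.stateBelief h (fun i : Fin h => τ i.castSucc) s

end POMDPParams

/-- A deterministic policy: given the length-`n` past history (most recent pair
first corresponds to index `n-1`) and the current observation, produce the
action for step `n+1`. -/
def Policy (A O : ℕ) := ∀ n : ℕ, (Fin n → Fin A × Fin O) → Fin O → Fin A

/-- A trajectory is admissible for `π` (i.e. lies in `Γ(π, h)`) if each of its
actions is the one `π` assigns to the preceding history. -/
def IsAdm {A O : ℕ} (π : Policy A O) {h : ℕ} (τ : POMDPParams.Traj A O h) : Prop :=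
  ∀ j : Fin h, (τ j).1 = π j.val (fun i : Fin j.val => τ (Fin.castLE j.isLt.le i)) (τ j).2

/-- `Γ(π, h)`: the finite set of length-`h` trajectories admissible for `π`. -/
noncomputable def GammaF {A O : ℕ} (π : Policy A O) (h : ℕ) :
    Finset (POMDPParams.Traj A O h) :=
  Finset.univ.filter (fun τ => IsAdm π τ)

/-- The state visitation probability `Pr^π_θ(s_h = s)` (for `h ≥ 1`). -/
noncomputable def visitProb {S A O : ℕ} (θ : POMDPParams S A O) (π : Policy A O)
    (h : ℕ) (s : Fin S) : ℝ :=
  ∑ τ ∈ GammaF π (h - 1), θ.stateBelief (h - 1) τ s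

/-- The trajectory induced by a deterministic policy `π` on an observation
sequence: actions are filled in by `π`. -/
def trajOf {A O : ℕ} (π : Policy A O) : (h : ℕ) → (Fin h → Fin O) → POMDPParams.Traj A O h
  | 0, _ => Fin.elim0
  | h + 1, ω =>
      Fin.snoc (trajOf π h (fun i : Fin h => ω i.castSucc))
        (π h (trajOf π h (fun i : Fin h => ω i.castSucc)) (ω (Fin.last h)), ω (Fin.last h))

end

/-!
Full column rank gives `𝕆†𝕆 = 1`, so `B_h(a, o) 𝕆_h = 𝕆_{h+1} 𝕋_h(a) diag(𝕆_h(o|·))`. Hence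
`b(τ_h) = 𝕆_{h+1} Pr(o_h, …, o₁, s_{h+1} = ·)`, and `p(τ_{h+1})` is an entry of `b(τ_h)`. Split
`b̂(τ_{h+1}) - b(τ_{h+1}) = B̂ (b̂(τ_h) - b(τ_h)) + (B̂ - B) b(τ_h)`. Since
`B̂ = 𝕆̂ 𝕋̂ diag(𝕆̂(o|·)) 𝕆̂†`, applying the next `𝕆̂†` (or, at the last step, nothing) to the first
term leaves `ℓ¹`-contractions, even after summing over `o`, acting on `𝕆̂† (b̂ - b)`. So the error
measured after `𝕆̂†` only accumulates the fresh terms `(B̂ - B) b`, each inflated once by the `ℓ¹`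
norm of a pseudoinverse, which is at most `√S / α`. Finally, `b(τ_h)` is a nonnegative combination
of the columns of `𝕆_{h+1} 𝕋_h(a)`, whose weights add up over trajectories to the state visitation
probabilities.
-/

section NormsAndPseudoinverse

variable {m n : ℕ}

theorem l1norm_nonneg (v : Fin n → ℝ) : 0 ≤ l1norm v :=
  Finset.sum_nonneg fun _ _ => abs_nonneg _

theorem l1norm_add_le (v w : Fin n → ℝ) : l1norm (v + w) ≤ l1norm v + l1norm w := by
  simp only [l1norm, ← Finset.sum_add_distrib]
  exact Finset.sum_le_sum fun i _ => abs_add_le _ _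

theorem l1norm_mulVec_le_sum_col (M : Matrix (Fin m) (Fin n) ℝ) (v : Fin n → ℝ) :
    l1norm (M *ᵥ v) ≤ ∑ j, l1norm (M.col j) * |v j| := by
  simp only [l1norm, Finset.sum_mul, Matrix.col_apply]
  rw [Finset.sum_comm]
  simp only [← abs_mul, Matrix.mulVec, dotProduct]
  exact Finset.sum_le_sum fun i _ => Finset.abs_sum_le_sum_abs _ _

theorem l1norm_mulVec_le_of_colStochastic {M : Matrix (Fin m) (Fin n) ℝ}
    (hM : ∀ i j, 0 ≤ M i j) (hM_sum : ∀ j, ∑ i, M i j = 1) (v : Fin n → ℝ) :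
    l1norm (M *ᵥ v) ≤ l1norm v := by
  have hcol (j : Fin n) : l1norm (M.col j) = 1 := by
    simp only [l1norm, Matrix.col_apply, abs_of_nonneg (hM _ _), hM_sum]
  refine (l1norm_mulVec_le_sum_col M v).trans_eq ?_
  simp only [hcol, one_mul]
  rfl

theorem one_le_of_l1norm_leftInverse_mulVec_le {M : Matrix (Fin m) (Fin n) ℝ}
    {N : Matrix (Fin n) (Fin m) ℝ} {C : ℝ} (hn : 0 < n) (hM : ∀ i j, 0 ≤ M i j)
    (hM_sum : ∀ j, ∑ i, M i j = 1) (hNM : N * M = 1)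
    (hN : ∀ x, l1norm (N *ᵥ x) ≤ C * l1norm x) : 1 ≤ C := by
  let e : Fin n → ℝ := Pi.single ⟨0, hn⟩ 1
  have he : l1norm e = 1 := by simp [l1norm, e, Pi.single_apply, apply_ite abs]
  have hMe : l1norm (M *ᵥ e) = 1 := by
    simp [l1norm, e, abs_of_nonneg (hM _ _), hM_sum]
  simpa [Matrix.mulVec_mulVec, hNM, he, hMe] using hN (M *ᵥ e)

theorem l2norm_eq_norm_toLp (v : Fin n → ℝ) : l2norm v = ‖WithLp.toLp 2 v‖ := by
  simp [l2norm, EuclideanSpace.norm_eq]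

theorem l2norm_nonneg (v : Fin n → ℝ) : 0 ≤ l2norm v := Real.sqrt_nonneg _

theorem l2norm_eq_zero {v : Fin n → ℝ} : l2norm v = 0 ↔ v = 0 := by
  simp [l2norm_eq_norm_toLp]

theorem l2norm_smul (c : ℝ) (v : Fin n → ℝ) : l2norm (c • v) = |c| * l2norm v := by
  simp [l2norm_eq_norm_toLp, norm_smul]

theorem dotProduct_self_eq_l2norm_sq (v : Fin n → ℝ) : v ⬝ᵥ v = l2norm v ^ 2 := by
  rw [l2norm, Real.sq_sqrt (Finset.sum_nonneg fun _ _ => sq_nonneg _)]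
  simp only [dotProduct, sq]

theorem dotProduct_le_l2norm_mul_l2norm (v w : Fin n → ℝ) : v ⬝ᵥ w ≤ l2norm v * l2norm w :=
  Real.sum_mul_le_sqrt_mul_sqrt _ _ _

theorem l2norm_le_l1norm (v : Fin n → ℝ) : l2norm v ≤ l1norm v := by
  refine Real.sqrt_le_iff.mpr ⟨l1norm_nonneg v, ?_⟩
  simpa only [l1norm, sq_abs] using
    Finset.sum_sq_le_sq_sum_of_nonneg (s := Finset.univ) fun i _ => abs_nonneg (v i)

theorem l1norm_le_sqrt_mul_l2norm (v : Fin n → ℝ) : l1norm v ≤ √n * l2norm v := by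
  rw [l2norm, ← Real.sqrt_mul (Nat.cast_nonneg n)]
  refine Real.le_sqrt_of_sq_le ?_
  simpa only [l1norm, sq_abs, Finset.card_univ, Fintype.card_fin] using
    sq_sum_le_card_mul_sum_sq (s := Finset.univ) (f := fun i => |v i|)

theorem sigmaMin_mul_l2norm_le (M : Matrix (Fin m) (Fin n) ℝ) (x : Fin n → ℝ) :
    sigmaMin M * l2norm x ≤ l2norm (M *ᵥ x) := by
  rcases (l2norm_nonneg x).eq_or_lt with hx | hx
  · rw [← hx, mul_zero]
    exact l2norm_nonneg _
  have hinv : |(l2norm x)⁻¹| = (l2norm x)⁻¹ := abs_of_pos (inv_pos.mpr hx)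
  have hle : sigmaMin M ≤ (l2norm x)⁻¹ * l2norm (M *ᵥ x) := by
    refine csInf_le ⟨0, ?_⟩ ⟨(l2norm x)⁻¹ • x, ?_, ?_⟩
    · rintro _ ⟨y, -, rfl⟩
      exact l2norm_nonneg _
    · rw [l2norm_smul, hinv, inv_mul_cancel₀ hx.ne']
    · rw [Matrix.mulVec_smul, l2norm_smul, hinv]
  rwa [inv_mul_eq_div, le_div_iff₀ hx] at hle

theorem mulVec_injective_of_sigmaMin_pos {M : Matrix (Fin m) (Fin n) ℝ} (hM : 0 < sigmaMin M) :
    Function.Injective M.mulVec := by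
  refine (injective_iff_map_eq_zero M.mulVecLin).mpr fun x hx => ?_
  have hle := sigmaMin_mul_l2norm_le M x
  rw [← Matrix.mulVecLin_apply, hx, l2norm_eq_zero.mpr rfl] at hle
  exact l2norm_eq_zero.mp <|
    le_antisymm (nonpos_of_mul_nonpos_right hle hM) (l2norm_nonneg x)

theorem isUnit_det_transpose_mul_self {M : Matrix (Fin m) (Fin n) ℝ}
    (hM : Function.Injective M.mulVec) : IsUnit (Mᵀ * M).det := by
  rw [← Matrix.isUnit_iff_isUnit_det, ← Matrix.conjTranspose_eq_transpose_of_trivial]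
  exact (Matrix.PosDef.conjTranspose_mul_self M hM).isUnit

theorem pinvFC_mul_self {M : Matrix (Fin m) (Fin n) ℝ} (hM : Function.Injective M.mulVec) :
    pinvFC M * M = 1 := by
  rw [pinvFC, Matrix.mul_assoc, Matrix.nonsing_inv_mul _ (isUnit_det_transpose_mul_self hM)]

theorem transpose_mul_self_mul_pinvFC {M : Matrix (Fin m) (Fin n) ℝ}
    (hM : Function.Injective M.mulVec) : Mᵀ * M * pinvFC M = Mᵀ := by
  rw [pinvFC, ← Matrix.mul_assoc,
    Matrix.mul_nonsing_inv _ (isUnit_det_transpose_mul_self hM), Matrix.one_mul]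

theorem l2norm_mulVec_pinvFC_mulVec_le {M : Matrix (Fin m) (Fin n) ℝ}
    (hM : Function.Injective M.mulVec) (x : Fin m → ℝ) :
    l2norm (M *ᵥ pinvFC M *ᵥ x) ≤ l2norm x := by
  set p := M *ᵥ pinvFC M *ᵥ x with hp
  have hdot (z : Fin m → ℝ) : p ⬝ᵥ z = pinvFC M *ᵥ x ⬝ᵥ Mᵀ *ᵥ z := by
    rw [Matrix.dotProduct_mulVec, Matrix.vecMul_transpose]
  have hnormal : Mᵀ *ᵥ p = Mᵀ *ᵥ x := by
    rw [hp, Matrix.mulVec_mulVec, Matrix.mulVec_mulVec, transpose_mul_self_mul_pinvFC hM]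
  have hsq : l2norm p * l2norm p ≤ l2norm p * l2norm x :=
    calc l2norm p * l2norm p = p ⬝ᵥ p := by rw [dotProduct_self_eq_l2norm_sq, sq]
      _ = p ⬝ᵥ x := by rw [hdot, hdot, hnormal]
      _ ≤ l2norm p * l2norm x := dotProduct_le_l2norm_mul_l2norm p x
  rcases (l2norm_nonneg p).eq_or_lt with h | h
  · exact h ▸ l2norm_nonneg x
  · exact le_of_mul_le_mul_left hsq h

theorem l1norm_pinvFC_mulVec_le {M : Matrix (Fin m) (Fin n) ℝ} {α : ℝ} (hα : 0 < α)
    (hM : α ≤ sigmaMin M) (x : Fin m → ℝ) : l1norm (pinvFC M *ᵥ x) ≤ √n / α * l1norm x := by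
  have hinj := mulVec_injective_of_sigmaMin_pos (hα.trans_le hM)
  have hl2 : α * l2norm (pinvFC M *ᵥ x) ≤ l1norm x :=
    calc α * l2norm (pinvFC M *ᵥ x) ≤ sigmaMin M * l2norm (pinvFC M *ᵥ x) :=
          mul_le_mul_of_nonneg_right hM (l2norm_nonneg _)
      _ ≤ l2norm (M *ᵥ pinvFC M *ᵥ x) := sigmaMin_mul_l2norm_le M _
      _ ≤ l2norm x := l2norm_mulVec_pinvFC_mulVec_le hinj x
      _ ≤ l1norm x := l2norm_le_l1norm x
  calc l1norm (pinvFC M *ᵥ x) ≤ √n * l2norm (pinvFC M *ᵥ x) := l1norm_le_sqrt_mul_l2norm _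
    _ ≤ √n * (l1norm x / α) := by
      gcongr
      rwa [le_div_iff₀' hα]
    _ = √n / α * l1norm x := by ring

end NormsAndPseudoinverse

section FiniteSums

theorem sum_apply_le_sum_sum {ι κ R : Type*} [Fintype ι] [Fintype κ] [AddCommMonoid R]
    [PartialOrder R] [IsOrderedAddMonoid R] {F : κ → ι → R} (hF : ∀ k i, 0 ≤ F k i) (f : ι → κ) :
    ∑ i, F (f i) i ≤ ∑ k, ∑ i, F k i := by
  rw [Finset.sum_comm]
  exact Finset.sum_le_sum fun i _ =>
    Finset.single_le_sum (f := (F · i)) (fun k _ => hF k i) (Finset.mem_univ (f i))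

theorem sum_range_le_add_sum_Icc {R : Type*} [AddCommMonoid R] [PartialOrder R]
    [IsOrderedAddMonoid R] {f g : ℕ → R} {c : R} {n : ℕ} (hc : 0 ≤ c) (hf : f 0 ≤ c)
    (hfg : ∀ k, k + 1 < n → f (k + 1) ≤ g (k + 2)) :
    ∑ k ∈ Finset.range n, f k ≤ c + ∑ h ∈ Finset.Icc 2 n, g h := by
  cases n with
  | zero => simpa using hc
  | succ m =>
    have hshift : ∑ h ∈ Finset.Icc 2 (m + 1), g h = ∑ k ∈ Finset.range m, g (k + 2) := by
      rw [← Finset.Ico_add_one_right_eq_Icc, Finset.sum_Ico_eq_sum_range]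
      simp [add_comm 2]
    rw [Finset.sum_range_succ', add_comm, hshift]
    exact add_le_add hf <| Finset.sum_le_sum fun k hk =>
      hfg k (Nat.succ_lt_succ (Finset.mem_range.mp hk))

end FiniteSums

section AdmissibleTrajectories

open POMDPParams (Traj)

variable {A O : ℕ} (π : Policy A O)

theorem GammaF_zero : GammaF π 0 = Finset.univ :=
  Finset.filter_true_of_mem fun _ _ j => j.elim0

theorem isAdm_snoc {h : ℕ} (τ : Traj A O h) (x : Fin A × Fin O) :
    IsAdm π (Fin.snoc τ x : Traj A O (h + 1)) ↔ IsAdm π τ ∧ x.1 = π h τ x.2 := by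
  have hinit {k : ℕ} (hk : k ≤ h) :
      (fun i : Fin k => (Fin.snoc τ x : Traj A O (h + 1)) (Fin.castLE (hk.trans h.le_succ) i))
        = fun i => τ (Fin.castLE hk i) :=
    funext fun i => Fin.snoc_castSucc (α := fun _ => Fin A × Fin O) x τ (Fin.castLE hk i)
  unfold IsAdm
  rw [Fin.forall_fin_succ']
  refine and_congr (forall_congr' fun j => ?_) ?_
  · rw [Fin.snoc_castSucc (α := fun _ => Fin A × Fin O), ← hinit j.isLt.le]
    rfl
  · rw [Fin.snoc_last (α := fun _ => Fin A × Fin O)]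
    exact Eq.congr_right (congrArg (π h · x.2) (hinit le_rfl))

theorem sum_GammaF_succ {R : Type*} [AddCommMonoid R] (h : ℕ) (f : Traj A O (h + 1) → R) :
    ∑ τ ∈ GammaF π (h + 1), f τ
      = ∑ τ ∈ GammaF π h, ∑ o, f (Fin.snoc τ (π h τ o, o)) := by
  have hsplit (τ : Traj A O h) (x : Fin A × Fin O) :
      (if IsAdm π (Fin.snocEquiv (fun _ => Fin A × Fin O) (x, τ)) then
        f (Fin.snocEquiv (fun _ => Fin A × Fin O) (x, τ)) else 0)
      = if IsAdm π τ ∧ x.1 = π h τ x.2 then f (Fin.snoc τ x) else 0 :=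
    if_congr (isAdm_snoc π τ x) rfl rfl
  simp only [GammaF, Finset.sum_filter]
  rw [← (Fin.snocEquiv fun _ => Fin A × Fin O).sum_comp, Fintype.sum_prod_type_right]
  refine Finset.sum_congr rfl fun τ _ => ?_
  rw [Fintype.sum_prod_type_right]
  simp only [hsplit]
  by_cases hτ : IsAdm π τ <;> simp [hτ]

end AdmissibleTrajectories

namespace POMDPParams

variable {S A O : ℕ}

theorem states_pos (θ : POMDPParams S A O) : 0 < S := by
  rcases S.eq_zero_or_pos with rfl | hS
  · simpa using θ.mu1_sum
  · exact hS

section SingleModel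

variable (θ : POMDPParams S A O)

/-- The latent-state operator `𝕋_h(a) diag(𝕆_h(o|·))`: it emits `o` and then moves to the next
state. -/
def latentOp (h : ℕ) (a : Fin A) (o : Fin O) : Matrix (Fin S) (Fin S) ℝ :=
  θ.T h a * Matrix.diagonal (θ.Ob h o)

theorem latentOp_mulVec (h : ℕ) (a : Fin A) (o : Fin O) (z : Fin S → ℝ) :
    θ.latentOp h a o *ᵥ z = θ.T h a *ᵥ fun s => θ.Ob h o s * z s := by
  rw [latentOp, ← Matrix.mulVec_mulVec]
  exact congrArg _ (funext fun s => Matrix.mulVec_diagonal _ _ s)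

theorem Bop_eq_mul_latentOp_mul (h : ℕ) (a : Fin A) (o : Fin O) :
    θ.Bop h a o = θ.Ob (h + 1) * θ.latentOp h a o * pinvFC (θ.Ob h) := by
  rw [Bop, latentOp, ← Matrix.mul_assoc]

theorem Bop_mul_Ob {h : ℕ} (hθ : pinvFC (θ.Ob h) * θ.Ob h = 1) (a : Fin A) (o : Fin O) :
    θ.Bop h a o * θ.Ob h = θ.Ob (h + 1) * θ.latentOp h a o := by
  rw [Bop_eq_mul_latentOp_mul, Matrix.mul_assoc, hθ, Matrix.mul_one]

theorem l1norm_Ob_mulVec_le (h : ℕ) (z : Fin S → ℝ) : l1norm (θ.Ob h *ᵥ z) ≤ l1norm z :=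
  l1norm_mulVec_le_of_colStochastic (θ.Ob_nonneg h) (θ.Ob_colsum h) z

theorem sum_l1norm_latentOp_mulVec_le (h : ℕ) (act : Fin O → Fin A) (z : Fin S → ℝ) :
    ∑ o, l1norm (θ.latentOp h (act o) o *ᵥ z) ≤ l1norm z := by
  calc ∑ o, l1norm (θ.latentOp h (act o) o *ᵥ z)
      ≤ ∑ o, l1norm fun s => θ.Ob h o s * z s := Finset.sum_le_sum fun o _ => by
        rw [latentOp_mulVec]
        exact l1norm_mulVec_le_of_colStochastic (θ.T_nonneg h _) (θ.T_colsum h _) _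
    _ = ∑ s, ∑ o, θ.Ob h o s * |z s| := by
        simp only [l1norm, abs_mul, abs_of_nonneg (θ.Ob_nonneg h _ _)]
        exact Finset.sum_comm
    _ = l1norm z := by simp only [← Finset.sum_mul, θ.Ob_colsum, one_mul, l1norm]

theorem stateBelief_nonneg {h : ℕ} (τ : Traj A O h) (s : Fin S) : 0 ≤ θ.stateBelief h τ s := by
  induction h generalizing s with
  | zero => exact θ.mu1_nonneg s
  | succ h ih =>
    simp only [stateBelief, Matrix.mulVec, dotProduct]
    exact Finset.sum_nonneg fun s' _ =>
      mul_nonneg (θ.T_nonneg ..) (mul_nonneg (θ.Ob_nonneg ..) (ih _ s'))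

theorem stateBelief_snoc {h : ℕ} (τ : Traj A O h) (x : Fin A × Fin O) :
    θ.stateBelief (h + 1) (Fin.snoc τ x)
      = θ.T (h + 1) x.1 *ᵥ fun s => θ.Ob (h + 1) x.2 s * θ.stateBelief h τ s := by
  simp only [stateBelief, Fin.snoc_last, Fin.snoc_castSucc]

theorem belief_snoc {h : ℕ} (τ : Traj A O h) (x : Fin A × Fin O) :
    θ.belief (h + 1) (Fin.snoc τ x) = θ.Bop (h + 1) x.1 x.2 *ᵥ θ.belief h τ := by
  simp only [belief, Fin.snoc_last, Fin.snoc_castSucc]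

theorem belief_eq_Ob_mulVec_stateBelief {h : ℕ}
    (hθ : ∀ j ∈ Finset.Icc 1 h, pinvFC (θ.Ob j) * θ.Ob j = 1) (τ : Traj A O h) :
    θ.belief h τ = θ.Ob (h + 1) *ᵥ θ.stateBelief h τ := by
  induction h with
  | zero => rfl
  | succ h ih =>
    have hinit := ih (fun j hj => hθ j (Finset.Icc_subset_Icc_right h.le_succ hj))
      fun i => τ i.castSucc
    rw [belief, hinit, Matrix.mulVec_mulVec, Bop_mul_Ob θ (hθ _ (by simp)),
      ← Matrix.mulVec_mulVec, latentOp_mulVec, stateBelief]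

theorem trajProb_snoc {h : ℕ} (hθ : ∀ j ∈ Finset.Icc 1 h, pinvFC (θ.Ob j) * θ.Ob j = 1)
    (τ : Traj A O h) (x : Fin A × Fin O) :
    θ.trajProb (h + 1) (Fin.snoc τ x) = θ.belief h τ x.2 := by
  rw [belief_eq_Ob_mulVec_stateBelief θ hθ]
  simp only [trajProb, Fin.snoc_last, Fin.snoc_castSucc, Matrix.mulVec, dotProduct]

theorem l1norm_mulVec_belief_snoc_le {m h : ℕ} (M : Matrix (Fin m) (Fin O) ℝ)
    (hθ : ∀ j ∈ Finset.Icc 1 (h + 1), pinvFC (θ.Ob j) * θ.Ob j = 1)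
    (τ : Traj A O h) (x : Fin A × Fin O) :
    l1norm (M *ᵥ θ.belief (h + 1) (Fin.snoc τ x))
      ≤ ∑ s, l1norm (M *ᵥ (θ.Ob (h + 2) * θ.T (h + 1) x.1).col s)
          * (θ.Ob (h + 1) x.2 s * θ.stateBelief h τ s) := by
  rw [belief_eq_Ob_mulVec_stateBelief θ hθ, stateBelief_snoc, Matrix.mulVec_mulVec _ (θ.Ob _),
    Matrix.mulVec_mulVec]
  refine (l1norm_mulVec_le_sum_col _ _).trans_eq (Finset.sum_congr rfl fun s _ => ?_)
  rw [abs_of_nonneg (mul_nonneg (θ.Ob_nonneg ..) (θ.stateBelief_nonneg ..))]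
  rfl

theorem sum_l1norm_mulVec_belief_succ_le {m h : ℕ} (M : Matrix (Fin m) (Fin O) ℝ)
    (hθ : ∀ j ∈ Finset.Icc 1 (h + 1), pinvFC (θ.Ob j) * θ.Ob j = 1) (π : Policy A O) :
    ∑ τ ∈ GammaF π (h + 1), l1norm (M *ᵥ θ.belief (h + 1) τ)
      ≤ ∑ a, ∑ s, l1norm (M *ᵥ (θ.Ob (h + 2) * θ.T (h + 1) a).col s)
          * visitProb θ π (h + 1) s := by
  let c (a : Fin A) (s : Fin S) : ℝ := l1norm (M *ᵥ (θ.Ob (h + 2) * θ.T (h + 1) a).col s)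
  have hnonneg (τ : Traj A O h) (a : Fin A) (o : Fin O) :
      0 ≤ ∑ s, c a s * (θ.Ob (h + 1) o s * θ.stateBelief h τ s) :=
    Finset.sum_nonneg fun s _ => mul_nonneg (l1norm_nonneg _)
      (mul_nonneg (θ.Ob_nonneg ..) (θ.stateBelief_nonneg ..))
  have hmarginal (τ : Traj A O h) (a : Fin A) :
      ∑ o, ∑ s, c a s * (θ.Ob (h + 1) o s * θ.stateBelief h τ s)
        = ∑ s, c a s * θ.stateBelief h τ s := by
    rw [Finset.sum_comm]
    simp only [← Finset.mul_sum, ← Finset.sum_mul, θ.Ob_colsum, one_mul]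
  calc ∑ τ ∈ GammaF π (h + 1), l1norm (M *ᵥ θ.belief (h + 1) τ)
      ≤ ∑ τ ∈ GammaF π h, ∑ o, ∑ s,
          c (π h τ o) s * (θ.Ob (h + 1) o s * θ.stateBelief h τ s) := by
        rw [sum_GammaF_succ]
        exact Finset.sum_le_sum fun τ _ => Finset.sum_le_sum fun o _ =>
          θ.l1norm_mulVec_belief_snoc_le M hθ τ (π h τ o, o)
    _ ≤ ∑ τ ∈ GammaF π h, ∑ a, ∑ s, c a s * θ.stateBelief h τ s :=
        Finset.sum_le_sum fun τ _ =>
          (sum_apply_le_sum_sum (hnonneg τ) (π h τ)).trans_eq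
            (Finset.sum_congr rfl fun a _ => hmarginal τ a)
    _ = ∑ a, ∑ s, c a s * visitProb θ π (h + 1) s := by
        rw [Finset.sum_comm]
        refine Finset.sum_congr rfl fun a _ => ?_
        rw [Finset.sum_comm]
        simp only [← Finset.mul_sum]
        rfl

end SingleModel

section TwoModels

variable (θ θh : POMDPParams S A O) (π : Policy A O)

/-- The error of the observable operators of `θh` at step `h + 1`, applied to the beliefs of `θ`
and summed over the histories and actions generated by `π`. -/
noncomputable def onPolicyOperatorError (h : ℕ) : ℝ :=
  ∑ τ ∈ GammaF π h, ∑ o,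
    l1norm ((θh.Bop (h + 1) (π h τ o) o - θ.Bop (h + 1) (π h τ o) o) *ᵥ θ.belief h τ)

theorem onPolicyOperatorError_le_sum_actions (h : ℕ) :
    onPolicyOperatorError θ θh π h ≤ ∑ a, ∑ o, ∑ τ ∈ GammaF π h,
      l1norm ((θh.Bop (h + 1) a o - θ.Bop (h + 1) a o) *ᵥ θ.belief h τ) := by
  refine (Finset.sum_le_sum fun τ _ => sum_apply_le_sum_sum (F := fun a o =>
    l1norm ((θh.Bop (h + 1) a o - θ.Bop (h + 1) a o) *ᵥ θ.belief h τ))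
    (fun _ _ => l1norm_nonneg _) (π h τ)).trans_eq ?_
  rw [Finset.sum_comm]
  exact Finset.sum_congr rfl fun a _ => Finset.sum_comm

theorem onPolicyOperatorError_zero_le :
    onPolicyOperatorError θ θh π 0
      ≤ ∑ a, ∑ o, l1norm ((θh.Bop 1 a o - θ.Bop 1 a o) *ᵥ θ.bvec0) := by
  simpa only [GammaF_zero, Fintype.sum_unique, belief]
    using onPolicyOperatorError_le_sum_actions θ θh π 0

theorem onPolicyOperatorError_succ_le {h : ℕ}
    (hθ : ∀ j ∈ Finset.Icc 1 (h + 1), pinvFC (θ.Ob j) * θ.Ob j = 1) :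
    onPolicyOperatorError θ θh π (h + 1)
      ≤ ∑ a, ∑ a', ∑ o, ∑ s,
          l1norm ((θh.Bop (h + 2) a o - θ.Bop (h + 2) a o) *ᵥ
            (θ.Ob (h + 2) * θ.T (h + 1) a').col s) * visitProb θ π (h + 1) s := by
  refine (onPolicyOperatorError_le_sum_actions θ θh π (h + 1)).trans
    (Finset.sum_le_sum fun a _ => ?_)
  rw [Finset.sum_comm (s := Finset.univ (α := Fin A))]
  exact Finset.sum_le_sum fun o _ => θ.sum_l1norm_mulVec_belief_succ_le _ hθ π

theorem sum_range_onPolicyOperatorError_le {n : ℕ}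
    (hθ : ∀ j ∈ Finset.Icc 1 (n - 1), pinvFC (θ.Ob j) * θ.Ob j = 1) :
    ∑ k ∈ Finset.range n, onPolicyOperatorError θ θh π k
      ≤ ∑ a, ∑ o, l1norm ((θh.Bop 1 a o - θ.Bop 1 a o) *ᵥ θ.bvec0)
        + ∑ h ∈ Finset.Icc 2 n, ∑ a, ∑ a', ∑ o, ∑ s,
            l1norm ((θh.Bop h a o - θ.Bop h a o) *ᵥ (θ.Ob h * θ.T (h - 1) a').col s)
              * visitProb θ π (h - 1) s := by
  refine sum_range_le_add_sum_Icc ?_ (onPolicyOperatorError_zero_le θ θh π) fun k hk =>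
    onPolicyOperatorError_succ_le θ θh π fun j hj =>
      hθ j (Finset.Icc_subset_Icc_right (Nat.le_sub_one_of_lt hk) hj)
  exact Finset.sum_nonneg fun _ _ => Finset.sum_nonneg fun _ _ => l1norm_nonneg _

theorem belief_snoc_sub_belief_snoc {h : ℕ} (τ : Traj A O h) (x : Fin A × Fin O) :
    θh.belief (h + 1) (Fin.snoc τ x) - θ.belief (h + 1) (Fin.snoc τ x)
      = θh.Bop (h + 1) x.1 x.2 *ᵥ (θh.belief h τ - θ.belief h τ)
        + (θh.Bop (h + 1) x.1 x.2 - θ.Bop (h + 1) x.1 x.2) *ᵥ θ.belief h τ := by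
  rw [belief_snoc, belief_snoc, Matrix.mulVec_sub, Matrix.sub_mulVec]
  abel

theorem sum_l1norm_mulVec_belief_sub_succ_le {m h : ℕ} {N : Matrix (Fin m) (Fin O) ℝ} {C : ℝ}
    (hN : ∀ x, l1norm (N *ᵥ x) ≤ C * l1norm x)
    (hNOb : ∀ z, l1norm (N *ᵥ θh.Ob (h + 2) *ᵥ z) ≤ l1norm z) :
    ∑ τ ∈ GammaF π (h + 1), l1norm (N *ᵥ (θh.belief (h + 1) τ - θ.belief (h + 1) τ))
      ≤ ∑ τ ∈ GammaF π h,
          l1norm (pinvFC (θh.Ob (h + 1)) *ᵥ (θh.belief h τ - θ.belief h τ))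
        + C * onPolicyOperatorError θ θh π h := by
  have hstep (τ : Traj A O h) (a : Fin A) (o : Fin O) :
      l1norm (N *ᵥ (θh.belief (h + 1) (Fin.snoc τ (a, o)) - θ.belief (h + 1) (Fin.snoc τ (a, o))))
        ≤ l1norm (θh.latentOp (h + 1) a o *ᵥ
              pinvFC (θh.Ob (h + 1)) *ᵥ (θh.belief h τ - θ.belief h τ))
          + C * l1norm ((θh.Bop (h + 1) a o - θ.Bop (h + 1) a o) *ᵥ θ.belief h τ) := by
    rw [belief_snoc_sub_belief_snoc, Matrix.mulVec_add, Bop_eq_mul_latentOp_mul,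
      ← Matrix.mulVec_mulVec, ← Matrix.mulVec_mulVec, ← Bop_eq_mul_latentOp_mul]
    exact (l1norm_add_le _ _).trans (add_le_add (hNOb _) (hN _))
  rw [sum_GammaF_succ, onPolicyOperatorError, Finset.mul_sum, ← Finset.sum_add_distrib]
  refine Finset.sum_le_sum fun τ _ => (Finset.sum_le_sum fun o _ => hstep τ (π h τ o) o).trans ?_
  rw [Finset.sum_add_distrib, Finset.mul_sum]
  gcongr
  exact θh.sum_l1norm_latentOp_mulVec_le _ _ _

/-- The matrix `N` is what makes the induction close: the bound is wanted for `N = 1`,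
and the step needs it for `N = 𝕆̂†`. -/
theorem sum_l1norm_mulVec_belief_sub_le {m n : ℕ} {N : Matrix (Fin m) (Fin O) ℝ} {C : ℝ}
    (hθh : ∀ j ∈ Finset.Icc 1 n, pinvFC (θh.Ob j) * θh.Ob j = 1)
    (hC : ∀ j ∈ Finset.Icc 1 n, ∀ x, l1norm (pinvFC (θh.Ob j) *ᵥ x) ≤ C * l1norm x)
    (hN : ∀ x, l1norm (N *ᵥ x) ≤ C * l1norm x)
    (hNOb : ∀ z, l1norm (N *ᵥ θh.Ob (n + 1) *ᵥ z) ≤ l1norm z) :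
    ∑ τ ∈ GammaF π n, l1norm (N *ᵥ (θh.belief n τ - θ.belief n τ))
      ≤ C * (l1norm (θh.bvec0 - θ.bvec0)
          + ∑ k ∈ Finset.range n, onPolicyOperatorError θ θh π k) := by
  induction n generalizing m with
  | zero => simpa [GammaF_zero, belief] using hN (θh.bvec0 - θ.bvec0)
  | succ n ih =>
    have hsub : Finset.Icc 1 n ⊆ Finset.Icc 1 (n + 1) := Finset.Icc_subset_Icc_right n.le_succ
    have hlast : n + 1 ∈ Finset.Icc 1 (n + 1) := by simp
    have hprev := ih (fun j hj => hθh j (hsub hj)) (fun j hj => hC j (hsub hj)) (hC _ hlast)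
      fun z => by rw [Matrix.mulVec_mulVec, hθh _ hlast, Matrix.one_mulVec]
    rw [Finset.sum_range_succ, ← add_assoc, mul_add]
    exact (sum_l1norm_mulVec_belief_sub_succ_le θ θh π hN hNOb).trans (by gcongr)

theorem sum_abs_trajProb_sub_eq_sum_l1norm_belief_sub {n : ℕ}
    (hθ : ∀ j ∈ Finset.Icc 1 n, pinvFC (θ.Ob j) * θ.Ob j = 1)
    (hθh : ∀ j ∈ Finset.Icc 1 n, pinvFC (θh.Ob j) * θh.Ob j = 1) :
    ∑ τ ∈ GammaF π (n + 1), |θh.trajProb (n + 1) τ - θ.trajProb (n + 1) τ|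
      = ∑ τ ∈ GammaF π n, l1norm (θh.belief n τ - θ.belief n τ) := by
  rw [sum_GammaF_succ]
  simp only [trajProb_snoc _ hθ, trajProb_snoc _ hθh, l1norm, Pi.sub_apply]

end TwoModels

end POMDPParams

open POMDPParams in
theorem density_error_le_operator_error_general {S A O : ℕ} {C : ℝ} (θ θh : POMDPParams S A O)
    (π : Policy A O) {H : ℕ} (hH : 1 ≤ H)
    (hθ : ∀ j ∈ Finset.Icc 1 (H - 1), pinvFC (θ.Ob j) * θ.Ob j = 1)
    (hθh : ∀ j ∈ Finset.Icc 1 H, pinvFC (θh.Ob j) * θh.Ob j = 1)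
    (hC : ∀ j ∈ Finset.Icc 1 H, ∀ x, l1norm (pinvFC (θh.Ob j) *ᵥ x) ≤ C * l1norm x) :
    ∑ τ ∈ GammaF π H, |θh.trajProb H τ - θ.trajProb H τ|
      ≤ C * (l1norm (θh.bvec0 - θ.bvec0)
          + (∑ a, ∑ o, l1norm ((θh.Bop 1 a o - θ.Bop 1 a o) *ᵥ θ.bvec0))
          + ∑ h ∈ Finset.Icc 2 (H - 1), ∑ a, ∑ a', ∑ o, ∑ s,
              l1norm ((θh.Bop h a o - θ.Bop h a o) *ᵥ (θ.Ob h * θ.T (h - 1) a').col s)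
                * visitProb θ π (h - 1) s) := by
  obtain ⟨n, rfl⟩ := Nat.exists_eq_add_of_le' hH
  rw [Nat.add_sub_cancel] at hθ ⊢
  have hsub : Finset.Icc 1 n ⊆ Finset.Icc 1 (n + 1) := Finset.Icc_subset_Icc_right n.le_succ
  have hfirst : 1 ∈ Finset.Icc 1 (n + 1) := by simp
  have hC_one : 1 ≤ C := one_le_of_l1norm_leftInverse_mulVec_le θh.states_pos (θh.Ob_nonneg 1)
    (θh.Ob_colsum 1) (hθh 1 hfirst) (hC 1 hfirst)
  have hbelief := sum_l1norm_mulVec_belief_sub_le (N := (1 : Matrix (Fin O) (Fin O) ℝ)) θ θh π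
    (fun j hj => hθh j (hsub hj)) (fun j hj => hC j (hsub hj))
    (fun x => by simpa using le_mul_of_one_le_left (l1norm_nonneg x) hC_one)
    (fun z => by simpa using θh.l1norm_Ob_mulVec_le (n + 1) z)
  simp only [Matrix.one_mulVec] at hbelief
  rw [sum_abs_trajProb_sub_eq_sum_l1norm_belief_sub θ θh π hθ fun j hj => hθh j (hsub hj),
    add_assoc (l1norm _)]
  refine hbelief.trans ?_
  gcongr
  exact sum_range_onPolicyOperatorError_le θ θh π fun j hj =>
    hθ j (Finset.Icc_subset_Icc_right n.pred_le hj)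

/-- Lemma `p_bound`: the total density-estimation error over
admissible length-`H` trajectories is bounded by errors in `b₀` and in the
observable operators, reweighted by state visitation probabilities. -/
theorem density_error_le_operator_error {S A O : ℕ} (hSO : S ≤ O)
    (α : ℝ) (hα : 0 < α) (θ θh : POMDPParams S A O)
    (hfc : ∀ j : ℕ, pinvFC (θ.Ob j) * θ.Ob j = 1)
    (hσ : ∀ j : ℕ, α ≤ sigmaMin (θh.Ob j))
    (π : Policy A O) (H : ℕ) (hH : 1 ≤ H) :
    ∑ τ ∈ GammaF π H, |θh.trajProb H τ - θ.trajProb H τ|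
      ≤ (Real.sqrt S / α) *
          (l1norm (θh.bvec0 - θ.bvec0)
            + (∑ a : Fin A, ∑ o : Fin O,
                l1norm ((θh.Bop 1 a o - θ.Bop 1 a o).mulVec θ.bvec0))
            + ∑ h ∈ Finset.Icc 2 (H - 1), ∑ a : Fin A, ∑ a' : Fin A, ∑ o : Fin O, ∑ s : Fin S,
                l1norm ((θh.Bop h a o - θ.Bop h a o).mulVec
                    (fun i => (θ.Ob h * θ.T (h - 1) a') i s)) *
                  visitProb θ π (h - 1) s) := by
  exact density_error_le_operator_error_general θ θh π hH (fun j _ => hfc j)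
    (fun j _ => pinvFC_mul_self (mulVec_injective_of_sigmaMin_pos (hα.trans_le (hσ j))))
    fun j _ => l1norm_pinvFC_mulVec_le hα (hσ j)
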